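/- Let m ≥ 2, let μ be a finite Borel measure on ℝ, let a : ℝ → ℝ and ρ : ℝ → ℝ be bounded Borel measurable functions, and let f : ℝ^m → ℝ be twice continuously differentiable with f and all its partial derivatives up to order two bounded. Define g_μ(x) := Σ_{i=1}^m ⟨Ψ_i(x)f, μ^{m−1}⟩ for x ∈ ℝ, and h_μ(x,y) := Σ_{1≤i,j≤m, i≠j} ⟨Ψ_{i,j}(x,y)f, μ^{m−2}⟩ for x,y ∈ ℝ, where Ψ_{i,j}(x,y)f places x in the i-th and y in the j-th variable of f. Then g_μ is twice differentiable, h_μ admits the mixed second partial derivative ∂²h_μ/∂x∂y, and (1/2)∫_ℝ a(x) (d²/dx²)g_μ(x) μ(dx) + (1/2)∫_{ℝ²} ρ(x−y) (∂²/∂x∂y)h_μ(x,y) μ(dx)μ(dy) = ∫_{ℝ^m} [ (1/2)Σ_{i=1}^m a(x_i) f''_{ii}(x₁,…,x_m) + (1/2)Σ_{1≤i,j≤m, i≠j} ρ(x_i−x_j) f''_{ij}(x₁,…,x_m) ] μ^m(dx₁,…,dx_m), where f''_{ij} denotes the second partial derivative of f with respect to its i-th and j-th variables. -/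

import Mathlib

open MeasureTheory Filter Topology

/-- The position of index `j` among the indices of `Fin (n+2)` after removing index `i`
(meaningful when `i ≠ j`): one has `i.succAbove (auxIdx i j) = j`. -/
def auxIdx {n : ℕ} (i j : Fin (n + 2)) : Fin (n + 1) :=
  if _h : (j : ℕ) < (i : ℕ) then ⟨(j : ℕ), by have := i.isLt; omega⟩
  else ⟨(j : ℕ) - 1, by have := j.isLt; omega⟩

/-- `Ψ_{i,j}(x,y) f : ℝ^n → ℝ` (for `f : ℝ^{n+2} → ℝ`, `i ≠ j`): place `x` in the `i`-th
variable of `f`, `y` in the `j`-th variable of `f`, and the `n` remaining arguments, in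
increasing order of position, as the free variables. -/
def Psi2 {n : ℕ} (i j : Fin (n + 2)) (x y : ℝ) (f : (Fin (n + 2) → ℝ) → ℝ)
    (z : Fin n → ℝ) : ℝ :=
  f (i.insertNth x ((auxIdx i j).insertNth y z))

/-- The first variational derivative `g_μ(x) = ∑_i ⟨Ψ_i(x) f, μ^{m-1}⟩` of
`F_{m,f}(ν) = ⟨f, ν^m⟩`, for `m = n+2`. -/
noncomputable def gVar (n : ℕ) (μ : Measure ℝ) (f : (Fin (n + 2) → ℝ) → ℝ) (x : ℝ) : ℝ :=
  ∑ i : Fin (n + 2), ∫ z, f (i.insertNth x z) ∂(Measure.pi fun _ : Fin (n + 1) => μ)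

/-- The second variational derivative `h_μ(x,y) = ∑_{i≠j} ⟨Ψ_{i,j}(x,y) f, μ^{m-2}⟩` of
`F_{m,f}(ν) = ⟨f, ν^m⟩`, for `m = n+2`. -/
noncomputable def hVar (n : ℕ) (μ : Measure ℝ) (f : (Fin (n + 2) → ℝ) → ℝ) (x y : ℝ) : ℝ :=
  ∑ i : Fin (n + 2), ∑ j : Fin (n + 2),
    if i ≠ j then ∫ z, Psi2 i j x y f z ∂(Measure.pi fun _ : Fin n => μ) else 0

/-- The second partial derivative `f''_{ij}` of `f : ℝ^m → ℝ` with respect to its `i`-th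
and `j`-th variables. -/
noncomputable def pd2 {m : ℕ} (f : (Fin m → ℝ) → ℝ) (i j : Fin m) (x : Fin m → ℝ) : ℝ :=
  fderiv ℝ (fun w => fderiv ℝ f w (Pi.single j (1 : ℝ))) x (Pi.single i (1 : ℝ))

/-- differentiation under the integral along a translation-like insertion. -/
theorem aux_hasDeriv {α E : Type*} [TopologicalSpace α] [MeasurableSpace α] [BorelSpace α]
    [SecondCountableTopology α]
    [NormedAddCommGroup E] [NormedSpace ℝ E] (ν : Measure α) [IsFiniteMeasure ν]
    (ι : ℝ → α → E) (v : E) (hc : ∀ x, Continuous (ι x))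
    (hd : ∀ x z, HasDerivAt (fun t => ι t z) v x)
    (F : E → ℝ) (hF : ContDiff ℝ 1 F) (C : ℝ) (hb : ∀ w, |F w| ≤ C)
    (hb' : ∀ w, |fderiv ℝ F w v| ≤ C) (x : ℝ) :
    HasDerivAt (fun t => ∫ z, F (ι t z) ∂ν) (∫ z, fderiv ℝ F (ι x z) v ∂ν) x := by
  have hcF : Continuous F := hF.continuous
  have hcF' : Continuous (fun w => fderiv ℝ F w v) :=
    (hF.continuous_fderiv (by norm_num)).clm_apply continuous_const
  refine (hasDerivAt_integral_of_dominated_loc_of_deriv_le (μ := ν)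
    (F := fun t z => F (ι t z)) (F' := fun t z => fderiv ℝ F (ι t z) v)
    (bound := fun _ => C) (s := Set.univ) Filter.univ_mem ?_ ?_ ?_ ?_ ?_ ?_).2
  · exact Eventually.of_forall fun t => (hcF.comp (hc t)).aestronglyMeasurable
  · exact Integrable.of_bound (hcF.comp (hc x)).aestronglyMeasurable C
      (Eventually.of_forall fun z => hb _)
  · exact (hcF'.comp (hc x)).aestronglyMeasurable
  · exact Eventually.of_forall fun z t _ => hb' _
  · exact integrable_const C
  · refine Eventually.of_forall fun z t _ => ?_
    exact ((hF.differentiable (by norm_num)) (ι t z)).hasFDerivAt.comp_hasDerivAt t (hd t z)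

theorem aux_fub {k : ℕ} (μ : Measure ℝ) [IsFiniteMeasure μ] (i : Fin (k + 1))
    (G : (Fin (k + 1) → ℝ) → ℝ) (hG : Measurable G) (C : ℝ) (hb : ∀ w, |G w| ≤ C) :
    Integrable (fun x => ∫ z, G (i.insertNth x z) ∂(Measure.pi fun _ : Fin k => μ)) μ ∧
    ∫ x, ∫ z, G (i.insertNth x z) ∂(Measure.pi fun _ : Fin k => μ) ∂μ
      = ∫ w, G w ∂(Measure.pi fun _ : Fin (k + 1) => μ) := by
  have hmp := (measurePreserving_piFinSuccAbove (fun _ : Fin (k + 1) => μ) i).symm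
  have hm : Measurable (fun p : ℝ × (Fin k → ℝ) => G (i.insertNth p.1 p.2)) :=
    hG.comp (MeasurableEquiv.piFinSuccAbove (fun _ : Fin (k + 1) => ℝ) i).symm.measurable
  have hint : Integrable (fun p : ℝ × (Fin k → ℝ) => G (i.insertNth p.1 p.2))
      (μ.prod (Measure.pi fun _ : Fin k => μ)) :=
    Integrable.of_bound hm.aestronglyMeasurable C (Eventually.of_forall fun z => hb _)
  refine ⟨hint.integral_prod_left, ?_⟩
  rw [← integral_prod _ hint]
  exact hmp.integral_comp' G

theorem aux_meas_insert {k : ℕ} (i : Fin (k + 1)) (x : ℝ) :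
    Continuous (fun z : Fin k → ℝ => (i.insertNth x z : Fin (k + 1) → ℝ)) := by
  fun_prop

theorem aux_succAbove {n : ℕ} (i j : Fin (n + 2)) (h : i ≠ j) :
    i.succAbove (auxIdx i j) = j := by
  have h' : (i : ℕ) ≠ j := fun e => h (Fin.ext e)
  unfold auxIdx
  ext
  split_ifs with h1
  · simp [Fin.succAbove, Fin.lt_def, h1]
  · have : ¬ ((j : ℕ) - 1 < i) := by omega
    simp [Fin.succAbove, Fin.lt_def, this]
    omega

theorem aux_insert_deriv {k : ℕ} (i : Fin (k + 1)) (z : Fin k → ℝ) (x : ℝ) :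
    HasDerivAt (fun t => (i.insertNth t z : Fin (k + 1) → ℝ)) (Pi.single i 1) x := by
  rw [hasDerivAt_pi]
  intro l
  refine Fin.succAboveCases i ?_ (fun l => ?_) l
  · simpa using hasDerivAt_id' x
  · simpa [Fin.succAbove_ne] using hasDerivAt_const x (z l)

theorem aux_insert_deriv2 {k : ℕ} (i : Fin (k + 2)) (j : Fin (k + 1)) (s : ℝ)
    (z : Fin k → ℝ) (x : ℝ) :
    HasDerivAt (fun t => (i.insertNth s (j.insertNth t z : Fin (k + 1) → ℝ) : Fin (k + 2) → ℝ))
      (Pi.single (i.succAbove j) 1) x := by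
  rw [hasDerivAt_pi]
  intro l
  refine Fin.succAboveCases i ?_ (fun l => ?_) l
  · simpa [(Fin.succAbove_ne i j).symm] using hasDerivAt_const x s
  · have := (hasDerivAt_pi.1 (aux_insert_deriv j z x)) l
    simpa [Pi.single_apply, Fin.succAbove_right_inj] using this

theorem aux_fub2 {k : ℕ} (μ : Measure ℝ) [IsFiniteMeasure μ] (i : Fin (k + 2)) (j : Fin (k + 1))
    (G : (Fin (k + 2) → ℝ) → ℝ) (hG : Measurable G) (C : ℝ) (hb : ∀ w, |G w| ≤ C) :
    (∀ x, Integrable (fun y => ∫ z, G (i.insertNth x (j.insertNth y z : Fin (k + 1) → ℝ))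
      ∂(Measure.pi fun _ : Fin k => μ)) μ) ∧
    Integrable (fun x => ∫ y, ∫ z, G (i.insertNth x (j.insertNth y z : Fin (k + 1) → ℝ))
      ∂(Measure.pi fun _ : Fin k => μ) ∂μ) μ ∧
    ∫ x, ∫ y, ∫ z, G (i.insertNth x (j.insertNth y z : Fin (k + 1) → ℝ))
      ∂(Measure.pi fun _ : Fin k => μ) ∂μ ∂μ
      = ∫ w, G w ∂(Measure.pi fun _ : Fin (k + 2) => μ) := by
  have h1 := aux_fub μ i G hG C hb
  have h2 := fun x => aux_fub μ j (fun w => G (i.insertNth x w))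
    (hG.comp (aux_meas_insert i x).measurable) C (fun w => hb _)
  refine ⟨fun x => (h2 x).1, ?_, ?_⟩
  · simp_rw [fun x => (h2 x).2]; exact h1.1
  · simp_rw [fun x => (h2 x).2]; exact h1.2

/-- for `m = n+2 ≥ 2`, a finite `μ`, bounded Borel `a, ρ` and a `C²` function
`f : ℝ^m → ℝ` bounded together with its partial derivatives up to order two, the
variational derivatives `g_μ`, `h_μ` are (twice, resp. mixed-second-order) differentiable
and `𝒜 F_{m,f}(μ) = ⟨G^m f, μ^m⟩`. -/
theorem statement3 (n : ℕ) (μ : Measure ℝ) [IsFiniteMeasure μ]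
    (a ρ : ℝ → ℝ) (ham : Measurable a) (Ca : ℝ) (hab : ∀ x, |a x| ≤ Ca)
    (hρm : Measurable ρ) (Cρ : ℝ) (hρb : ∀ x, |ρ x| ≤ Cρ)
    (f : (Fin (n + 2) → ℝ) → ℝ) (hf : ContDiff ℝ 2 f)
    (C : ℝ) (hfb : ∀ k : ℕ, k ≤ 2 → ∀ z, ‖iteratedFDeriv ℝ k f z‖ ≤ C) :
    (∀ x, DifferentiableAt ℝ (gVar n μ f) x) ∧
    (∀ x, DifferentiableAt ℝ (deriv (gVar n μ f)) x) ∧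
    (∀ x y, DifferentiableAt ℝ (fun y' => hVar n μ f x y') y) ∧
    (∀ x y, DifferentiableAt ℝ (fun x' => deriv (fun y' => hVar n μ f x' y') y) x) ∧
    ((1 / 2) * (∫ x, a x * deriv (deriv (gVar n μ f)) x ∂μ)
      + (1 / 2) * (∫ x, ∫ y,
          ρ (x - y) * deriv (fun x' => deriv (fun y' => hVar n μ f x' y') y) x ∂μ ∂μ)
      = ∫ z, ((1 / 2) * ∑ i : Fin (n + 2), a (z i) * pd2 f i i z
          + (1 / 2) * ∑ i : Fin (n + 2), ∑ j : Fin (n + 2),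
              if i ≠ j then ρ (z i - z j) * pd2 f i j z else 0)
          ∂(Measure.pi fun _ : Fin (n + 2) => μ)) := by
  have hF : ∀ j, ContDiff ℝ 1 (fun w => fderiv ℝ f w (Pi.single j (1 : ℝ))) := fun j =>
    (hf.fderiv_right (m := 1) (by norm_num)).clm_apply contDiff_const
  have hs : ∀ j : Fin (n + 2), ‖(Pi.single j (1 : ℝ) : Fin (n + 2) → ℝ)‖ = 1 := fun j => by
    rw [Pi.norm_single, norm_one]
  have b0 : ∀ w, |f w| ≤ C := fun w => by simpa using hfb 0 (by norm_num) w
  have b1 : ∀ j w, |fderiv ℝ f w (Pi.single j (1 : ℝ))| ≤ C := fun j w => by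
    have h1 := (fderiv ℝ f w).le_opNorm (Pi.single j (1 : ℝ))
    have h2 := hfb 1 (by norm_num) w
    rw [norm_iteratedFDeriv_one] at h2
    rw [hs, mul_one] at h1
    exact h1.trans h2
  have b2 : ∀ i j w, |pd2 f i j w| ≤ C := fun i j w => by
    have hd : DifferentiableAt ℝ (fderiv ℝ f) w :=
      ((hf.fderiv_right (m := 1) (by norm_num)).differentiable (by norm_num)) w
    have e : pd2 f i j w = fderiv ℝ (fderiv ℝ f) w (Pi.single i 1) (Pi.single j 1) := by
      unfold pd2
      rw [fderiv_clm_apply hd (differentiableAt_const _)]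
      simp
    have h2 := hfb 2 le_rfl w
    have h3 : ‖fderiv ℝ (fderiv ℝ f) w‖ ≤ C := by
      rw [← norm_iteratedFDeriv_one, norm_iteratedFDeriv_fderiv]
      exact h2
    have h1 := (fderiv ℝ (fderiv ℝ f) w).le_opNorm₂ (Pi.single i (1 : ℝ)) (Pi.single j (1 : ℝ))
    rw [hs, hs, mul_one, mul_one] at h1
    rw [e]
    exact h1.trans h3
  have m2 : ∀ i j, Measurable (pd2 f i j) := fun i j =>
    (((hF j).continuous_fderiv (by norm_num)).clm_apply continuous_const).measurable
  have C0 : 0 ≤ C := (abs_nonneg _).trans (b0 0)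
  have g1 : ∀ x, HasDerivAt (gVar n μ f) (∑ i : Fin (n + 2),
      ∫ z, fderiv ℝ f (i.insertNth x z) (Pi.single i (1 : ℝ))
        ∂(Measure.pi fun _ : Fin (n + 1) => μ)) x := fun x => by
    unfold gVar
    refine HasDerivAt.fun_sum fun i _ => ?_
    exact aux_hasDeriv _ (fun t z => (i.insertNth t z : Fin (n + 2) → ℝ)) _
      (aux_meas_insert i) (fun x z => aux_insert_deriv i z x) f (hf.of_le (by norm_num)) C b0
      (b1 i) x
  have g1' : deriv (gVar n μ f) = fun x => ∑ i : Fin (n + 2),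
      ∫ z, fderiv ℝ f (i.insertNth x z) (Pi.single i (1 : ℝ))
        ∂(Measure.pi fun _ : Fin (n + 1) => μ) := funext fun x => (g1 x).deriv
  have g2 : ∀ x, HasDerivAt (deriv (gVar n μ f)) (∑ i : Fin (n + 2),
      ∫ z, pd2 f i i (i.insertNth x z)
        ∂(Measure.pi fun _ : Fin (n + 1) => μ)) x := fun x => by
    rw [g1']
    refine HasDerivAt.fun_sum fun i _ => ?_
    exact aux_hasDeriv _ (fun t z => (i.insertNth t z : Fin (n + 2) → ℝ)) _
      (aux_meas_insert i) (fun x z => aux_insert_deriv i z x) _ (hF i) C (b1 i)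
      (b2 i i) x
  have h1 : ∀ x y, HasDerivAt (fun y' => hVar n μ f x y') (∑ i : Fin (n + 2), ∑ j : Fin (n + 2),
      if i ≠ j then ∫ z, fderiv ℝ f
        (i.insertNth x ((auxIdx i j).insertNth y z : Fin (n + 1) → ℝ)) (Pi.single j (1 : ℝ))
        ∂(Measure.pi fun _ : Fin n => μ) else 0) y := fun x y => by
    unfold hVar
    refine HasDerivAt.fun_sum fun i _ => HasDerivAt.fun_sum fun j _ => ?_
    by_cases hij : i = j
    · simpa [hij] using hasDerivAt_const y (0 : ℝ)
    · simp only [ne_eq, hij, not_false_eq_true, if_true]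
      exact aux_hasDeriv _ (fun t z => (i.insertNth x
          ((auxIdx i j).insertNth t z : Fin (n + 1) → ℝ) : Fin (n + 2) → ℝ)) _
        (fun t => (aux_meas_insert i x).comp (aux_meas_insert _ t))
        (fun t z => by simpa only [aux_succAbove i j hij] using
          aux_insert_deriv2 i (auxIdx i j) x z t) f (hf.of_le (by norm_num)) C b0
        (b1 j) y
  have h1' : ∀ y, (fun x' => deriv (fun y' => hVar n μ f x' y') y) = fun x =>
      ∑ i : Fin (n + 2), ∑ j : Fin (n + 2),
      if i ≠ j then ∫ z, fderiv ℝ f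
        (i.insertNth x ((auxIdx i j).insertNth y z : Fin (n + 1) → ℝ)) (Pi.single j (1 : ℝ))
        ∂(Measure.pi fun _ : Fin n => μ) else 0 := fun y => funext fun x => (h1 x y).deriv
  have h2 : ∀ x y, HasDerivAt (fun x' => deriv (fun y' => hVar n μ f x' y') y)
      (∑ i : Fin (n + 2), ∑ j : Fin (n + 2),
      if i ≠ j then ∫ z, pd2 f i j
        (i.insertNth x ((auxIdx i j).insertNth y z : Fin (n + 1) → ℝ))
        ∂(Measure.pi fun _ : Fin n => μ) else 0) x := fun x y => by
    rw [h1']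
    refine HasDerivAt.fun_sum fun i _ => HasDerivAt.fun_sum fun j _ => ?_
    by_cases hij : i = j
    · simpa [hij] using hasDerivAt_const x (0 : ℝ)
    · simp only [ne_eq, hij, not_false_eq_true, if_true]
      exact aux_hasDeriv _ (fun t z => (i.insertNth t
          ((auxIdx i j).insertNth y z : Fin (n + 1) → ℝ) : Fin (n + 2) → ℝ)) _
        (fun t => (aux_meas_insert i t).comp (aux_meas_insert _ y))
        (fun t z => aux_insert_deriv i _ t) _ (hF j) C (b1 j)
        (b2 i j) x
  refine ⟨fun x => (g1 x).differentiableAt, fun x => (g2 x).differentiableAt,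
    fun x y => (h1 x y).differentiableAt, fun x y => (h2 x y).differentiableAt, ?_⟩
  -- the two Fubini steps
  have mA : ∀ i : Fin (n + 2), Measurable fun w : Fin (n + 2) → ℝ => a (w i) * pd2 f i i w :=
    fun i => (ham.comp (measurable_pi_apply i)).mul (m2 i i)
  have bA : ∀ (i : Fin (n + 2)) (w : Fin (n + 2) → ℝ), |a (w i) * pd2 f i i w| ≤ Ca * C :=
    fun i w => by
      rw [abs_mul]
      exact mul_le_mul (hab _) (b2 _ _ _) (abs_nonneg _) ((abs_nonneg _).trans (hab 0))
  have mR : ∀ i j : Fin (n + 2),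
      Measurable fun w : Fin (n + 2) → ℝ => ρ (w i - w j) * pd2 f i j w :=
    fun i j => (hρm.comp ((measurable_pi_apply i).sub (measurable_pi_apply j))).mul (m2 i j)
  have bR : ∀ (i j : Fin (n + 2)) (w : Fin (n + 2) → ℝ),
      |ρ (w i - w j) * pd2 f i j w| ≤ Cρ * C :=
    fun i j w => by
      rw [abs_mul]
      exact mul_le_mul (hρb _) (b2 _ _ _) (abs_nonneg _) ((abs_nonneg _).trans (hρb 0))
  have iA : ∀ i : Fin (n + 2), Integrable (fun w : Fin (n + 2) → ℝ => a (w i) * pd2 f i i w)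
      (Measure.pi fun _ : Fin (n + 2) => μ) := fun i =>
    Integrable.of_bound (mA i).aestronglyMeasurable _ (Eventually.of_forall fun z => bA i z)
  have iR : ∀ i j : Fin (n + 2), Integrable (fun w : Fin (n + 2) → ℝ =>
      if i ≠ j then ρ (w i - w j) * pd2 f i j w else 0)
      (Measure.pi fun _ : Fin (n + 2) => μ) := fun i j => by
    by_cases hij : i = j
    · simp [hij]
    · simp only [ne_eq, hij, not_false_eq_true, if_true]
      exact Integrable.of_bound (mR i j).aestronglyMeasurable _
        (Eventually.of_forall fun z => bR i j z)
  have E1 : ∫ x, a x * deriv (deriv (gVar n μ f)) x ∂μ =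
      ∑ i : Fin (n + 2), ∫ w, a (w i) * pd2 f i i w ∂(Measure.pi fun _ : Fin (n + 2) => μ) := by
    have key : ∀ x, a x * deriv (deriv (gVar n μ f)) x = ∑ i : Fin (n + 2),
        ∫ z, (fun w : Fin (n + 2) → ℝ => a (w i) * pd2 f i i w) (i.insertNth x z)
          ∂(Measure.pi fun _ : Fin (n + 1) => μ) := fun x => by
      rw [(g2 x).deriv, Finset.mul_sum]
      refine Finset.sum_congr rfl fun i _ => ?_
      simp only [Fin.insertNth_apply_same]
      rw [integral_const_mul]
    simp_rw [key]
    rw [integral_finsetSum _ fun i _ => (aux_fub μ i _ (mA i) _ (bA i)).1]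
    exact Finset.sum_congr rfl fun i _ => (aux_fub μ i _ (mA i) _ (bA i)).2
  have E2 : ∫ x, ∫ y, ρ (x - y) * deriv (fun x' => deriv (fun y' => hVar n μ f x' y') y) x ∂μ ∂μ =
      ∑ i : Fin (n + 2), ∑ j : Fin (n + 2), ∫ w, (if i ≠ j then ρ (w i - w j) * pd2 f i j w else 0)
        ∂(Measure.pi fun _ : Fin (n + 2) => μ) := by
    have key : ∀ x y, ρ (x - y) * deriv (fun x' => deriv (fun y' => hVar n μ f x' y') y) x =
        ∑ i : Fin (n + 2), ∑ j : Fin (n + 2),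
        ∫ z, (fun w : Fin (n + 2) → ℝ => if i ≠ j then ρ (w i - w j) * pd2 f i j w else 0)
          (i.insertNth x ((auxIdx i j).insertNth y z : Fin (n + 1) → ℝ))
          ∂(Measure.pi fun _ : Fin n => μ) := fun x y => by
      rw [(h2 x y).deriv, Finset.mul_sum]
      refine Finset.sum_congr rfl fun i _ => ?_
      rw [Finset.mul_sum]
      refine Finset.sum_congr rfl fun j _ => ?_
      by_cases hij : i = j
      · simp [hij]
      · simp only [ne_eq, hij, not_false_eq_true, if_true]
        rw [← integral_const_mul]
        refine integral_congr_ae (Eventually.of_forall fun z => ?_)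
        have e : (i.insertNth x ((auxIdx i j).insertNth y z : Fin (n + 1) → ℝ) :
            Fin (n + 2) → ℝ) j = y := by
          have e' := Fin.insertNth_apply_succAbove (α := fun _ => ℝ) i x
            ((auxIdx i j).insertNth y z : Fin (n + 1) → ℝ) (auxIdx i j)
          rw [Fin.insertNth_apply_same] at e'
          rwa [aux_succAbove i j hij] at e'
        simp only [Fin.insertNth_apply_same, e]
    have mT : ∀ i j : Fin (n + 2), Measurable (fun w : Fin (n + 2) → ℝ =>
        if i ≠ j then ρ (w i - w j) * pd2 f i j w else 0) := fun i j => by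
      by_cases hij : i = j
      · simp [hij]
      · simpa only [ne_eq, hij, not_false_eq_true, if_true] using mR i j
    have bT : ∀ (i j : Fin (n + 2)) (w : Fin (n + 2) → ℝ),
        |if i ≠ j then ρ (w i - w j) * pd2 f i j w else 0| ≤ Cρ * C := fun i j w => by
      by_cases hij : i = j
      · simpa [hij] using mul_nonneg ((abs_nonneg _).trans (hρb 0)) C0
      · simpa only [ne_eq, hij, not_false_eq_true, if_true] using bR i j w
    have T := fun i j => aux_fub2 μ i (auxIdx i j) _ (mT i j) _ (bT i j)
    simp_rw [key]
    have s1 : ∀ x, ∫ y, ∑ i : Fin (n + 2), ∑ j : Fin (n + 2),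
        ∫ z, (fun w : Fin (n + 2) → ℝ => if i ≠ j then ρ (w i - w j) * pd2 f i j w else 0)
          (i.insertNth x ((auxIdx i j).insertNth y z : Fin (n + 1) → ℝ))
          ∂(Measure.pi fun _ : Fin n => μ) ∂μ = ∑ i : Fin (n + 2), ∑ j : Fin (n + 2), ∫ y,
        ∫ z, (fun w : Fin (n + 2) → ℝ => if i ≠ j then ρ (w i - w j) * pd2 f i j w else 0)
          (i.insertNth x ((auxIdx i j).insertNth y z : Fin (n + 1) → ℝ))
          ∂(Measure.pi fun _ : Fin n => μ) ∂μ := fun x => by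
      rw [integral_finsetSum _ fun i _ => integrable_finsetSum _ fun j _ => (T i j).1 x]
      exact Finset.sum_congr rfl fun i _ => integral_finsetSum _ fun j _ => (T i j).1 x
    rw [integral_congr_ae (Eventually.of_forall s1),
      integral_finsetSum _ fun i _ => integrable_finsetSum _ fun j _ => (T i j).2.1]
    refine Finset.sum_congr rfl fun i _ => ?_
    rw [integral_finsetSum _ fun j _ => (T i j).2.1]
    exact Finset.sum_congr rfl fun j _ => (T i j).2.2
  rw [E1, E2, integral_add
    ((integrable_finsetSum _ fun i _ => iA i).const_mul _)
    ((integrable_finsetSum _ fun i _ => integrable_finsetSum _ fun j _ => iR i j).const_mul _),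
    integral_const_mul, integral_const_mul, integral_finsetSum _ fun i _ => iA i,
    integral_finsetSum _ fun i _ => integrable_finsetSum _ fun j _ => iR i j]
  congr 2
  exact Finset.sum_congr rfl fun i _ => (integral_finsetSum _ fun j _ => iR i j).symm
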